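/- arXiv:2204.11947 — 2 statements merged into one kernel-verified Lean document; each statement's English description precedes it below -/
import Mathlib

section
/- Let ε ∈ (0,1), M₀ > 0, A ≥ 0, and let m : (0,1] → [0,∞) be a nondecreasing function. Define θ(s) := max{m(s), M₀ A² s²} for s ∈ (0,1]. Assume that for every integer k ≥ 0, setting σ = 2^{-k-2}, one has θ(σ) ≤ max{2^{2ε−2} θ(2σ), 2^{4ε−4} θ(4σ)}. Then there exists a constant C > 0, depending only on ε and M₀, such that m(s) ≤ C s^{2−2ε} max{m(1/4), m(1/2)} + C s^{2−2ε} A² for every s ∈ (0, 1/2). -/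
/-- Dyadic two-step decay iteration underlying the improved excess decay:
if `θ(s) = max (m s) (M₀ A² s²)` satisfies a two-scale decay inequality at all
dyadic scales `σ = 2^(-k-2)`, then `m` decays like `s^(2-2ε)` on `(0, 1/2)`,
with a constant depending only on `ε` and `M₀`. -/
theorem dyadic_decay_iteration (ε M₀ : ℝ) (hε : 0 < ε) (hε1 : ε < 1) (hM₀ : 0 < M₀) :
    ∃ C : ℝ, 0 < C ∧
      ∀ A : ℝ, 0 ≤ A →
      ∀ m : ℝ → ℝ,
        (∀ s ∈ Set.Ioc (0 : ℝ) 1, 0 ≤ m s) →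
        (∀ s t : ℝ, 0 < s → s ≤ t → t ≤ 1 → m s ≤ m t) →
        (∀ k : ℕ,
          max (m ((2 : ℝ) ^ (-(k : ℝ) - 2)))
              (M₀ * A ^ 2 * ((2 : ℝ) ^ (-(k : ℝ) - 2)) ^ 2) ≤
            max ((2 : ℝ) ^ (2 * ε - 2) *
                  max (m (2 * (2 : ℝ) ^ (-(k : ℝ) - 2)))
                      (M₀ * A ^ 2 * (2 * (2 : ℝ) ^ (-(k : ℝ) - 2)) ^ 2))
                ((2 : ℝ) ^ (4 * ε - 4) *
                  max (m (4 * (2 : ℝ) ^ (-(k : ℝ) - 2)))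
                      (M₀ * A ^ 2 * (4 * (2 : ℝ) ^ (-(k : ℝ) - 2)) ^ 2))) →
        ∀ s : ℝ, 0 < s → s < 1 / 2 →
          m s ≤ C * s ^ (2 - 2 * ε) * max (m (1 / 4)) (m (1 / 2))
              + C * s ^ (2 - 2 * ε) * A ^ 2 := by
  have hp : 0 < 2 - 2 * ε := by linarith
  have h4p : (0:ℝ) < (4:ℝ) ^ (2 - 2 * ε) := by positivity
  have h2p : (0:ℝ) < (2:ℝ) ^ (2 - 2 * ε) := by positivity
  refine ⟨2 ^ (2 - 2 * ε) * 4 ^ (2 - 2 * ε) * (1 + M₀), by positivity, ?_⟩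
  intro A hA m hm0 hmono hdec s hs0 hs1
  set p := 2 - 2 * ε with hpdef
  set D := max (m (1 / 4)) (m (1 / 2)) with hD
  have hD0 : 0 ≤ D := le_max_of_le_left (hm0 _ ⟨by norm_num, by norm_num⟩)
  have hMA : 0 ≤ M₀ * A ^ 2 := by positivity
  set B := D + M₀ * A ^ 2 with hB
  have hB0 : 0 ≤ B := by positivity
  have e1 : (2:ℝ) ^ (2 * ε - 2) = ((2:ℝ) ^ p)⁻¹ := by
    rw [← Real.rpow_neg (by norm_num)]; congr 1; rw [hpdef]; ring
  have e2 : (2:ℝ) ^ (4 * ε - 4) = ((4:ℝ) ^ p)⁻¹ := by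
    rw [show (4:ℝ) = 2 * 2 by norm_num, Real.mul_rpow (by norm_num) (by norm_num),
      ← Real.rpow_add (by norm_num), ← Real.rpow_neg (by norm_num)]
    congr 1; rw [hpdef]; ring
  have e3 : ∀ k : ℕ, (2:ℝ) ^ (-(k : ℝ) - 2) = (1 / 2) ^ (k + 2) := by
    intro k
    rw [show -(k : ℝ) - 2 = -((k + 2 : ℕ) : ℝ) by push_cast; ring,
      Real.rpow_neg (by norm_num), Real.rpow_natCast, one_div, inv_pow]
  have key : ∀ j : ℕ,
      max (m ((1 / 2) ^ (j + 1))) (M₀ * A ^ 2 * ((1 / 2) ^ (j + 1)) ^ 2)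
        ≤ 4 ^ p * B * ((1 / 2 : ℝ) ^ (j + 1)) ^ p ∧
      max (m ((1 / 2) ^ (j + 2))) (M₀ * A ^ 2 * ((1 / 2) ^ (j + 2)) ^ 2)
        ≤ 4 ^ p * B * ((1 / 2 : ℝ) ^ (j + 2)) ^ p := by
    intro j
    induction j with
    | zero =>
      have a1 : m (1 / 2) ≤ D := le_max_right _ _
      have a2 : m (1 / 4) ≤ D := le_max_left _ _
      have f1 : (4:ℝ) ^ p * (1 / 2 : ℝ) ^ p = 2 ^ p := by
        rw [← Real.mul_rpow (by norm_num) (by norm_num)]; norm_num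
      have f2 : (4:ℝ) ^ p * (1 / 4 : ℝ) ^ p = 1 := by
        rw [← Real.mul_rpow (by norm_num) (by norm_num)]; norm_num
      have f3 : (1:ℝ) ≤ 2 ^ p := Real.one_le_rpow (by norm_num) hp.le
      have g1 : (1 / 2 : ℝ) ^ (0 + 1) = 1 / 2 := by norm_num
      have g2 : (1 / 2 : ℝ) ^ (0 + 2) = 1 / 4 := by norm_num
      rw [g1, g2, mul_right_comm (4 ^ p) B ((1 / 2 : ℝ) ^ p), mul_right_comm (4 ^ p) B ((1 / 4 : ℝ) ^ p), f1, f2, one_mul]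
      have : B ≤ 2 ^ p * B := le_mul_of_one_le_left hB0 f3
      refine ⟨max_le ?_ ?_, max_le ?_ ?_⟩ <;> linarith
    | succ j ih =>
      obtain ⟨ih1, ih2⟩ := ih
      refine ⟨ih2, ?_⟩
      have h := hdec (j + 1)
      rw [e3, e1, e2] at h
      have x1 : 2 * (1 / 2 : ℝ) ^ (j + 1 + 2) = (1 / 2) ^ (j + 2) := by ring
      have x2 : 4 * (1 / 2 : ℝ) ^ (j + 1 + 2) = (1 / 2) ^ (j + 1) := by ring
      have y1 : ((1 / 2 : ℝ) ^ (j + 2)) ^ p = 2 ^ p * ((1 / 2 : ℝ) ^ (j + 1 + 2)) ^ p := by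
        rw [← x1, Real.mul_rpow (by norm_num) (by positivity)]
      have y2 : ((1 / 2 : ℝ) ^ (j + 1)) ^ p = 4 ^ p * ((1 / 2 : ℝ) ^ (j + 1 + 2)) ^ p := by
        rw [← x2, Real.mul_rpow (by norm_num) (by positivity)]
      rw [x1, x2] at h
      rw [y1] at ih2
      rw [y2] at ih1
      refine h.trans (max_le ?_ ?_)
      · rw [inv_mul_le_iff₀ h2p]; linarith
      · rw [inv_mul_le_iff₀ h4p]; linarith
  obtain ⟨n, hn1, hn2⟩ := exists_nat_pow_near_of_lt_one (x := 2 * s) (y := (1 / 2 : ℝ))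
    (by linarith) (by linarith) (by norm_num) (by norm_num)
  have hx : (1 / 2 : ℝ) ^ (n + 1) = (1 / 2) ^ n / 2 := by ring
  have hle1 : (1 / 2 : ℝ) ^ (n + 1) ≤ 1 := pow_le_one₀ (by norm_num) (by norm_num)
  have h1 : m s ≤ m ((1 / 2) ^ (n + 1)) := hmono _ _ hs0 (by linarith) hle1
  have h2 := (le_max_left _ _).trans (key n).1
  have h3 : ((1 / 2 : ℝ) ^ (n + 1)) ^ p ≤ 2 ^ p * s ^ p := by
    rw [← Real.mul_rpow (by norm_num) hs0.le]
    exact Real.rpow_le_rpow (by positivity) hn1.le hp.le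
  have hsp : 0 ≤ s ^ p := by positivity
  have hBle : B ≤ (1 + M₀) * (D + A ^ 2) := by
    have := mul_nonneg hM₀.le hD0
    nlinarith [sq_nonneg A]
  calc m s ≤ 4 ^ p * B * ((1 / 2 : ℝ) ^ (n + 1)) ^ p := h1.trans h2
    _ ≤ 4 ^ p * ((1 + M₀) * (D + A ^ 2)) * (2 ^ p * s ^ p) := by gcongr
    _ = _ := by ring
end

section
/- Let γ ⊂ ℝ^m be a nonempty closed set, let Ω ⊂ ℝ^m \ γ, let (X, d) be a metric space, and let λ ≥ 0 and δ ∈ (0, 1]. Let u : Ω → X and φ : γ → X satisfy: (i) φ is λ-Lipschitz; (ii) d(u(x), u(y)) ≤ λ |x − y| for all x, y ∈ Ω with |x − y| ≤ δ·max(dist(x, γ), dist(y, γ)); (iii) for every x ∈ Ω and every x_γ ∈ γ with |x − x_γ| = dist(x, γ), one has d(u(x), φ(x_γ)) ≤ λ·dist(x, γ). Then the map U : Ω ∪ γ → X defined by U = u on Ω and U = φ on γ is Lipschitz with constant 5λ/δ. -/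
/-- Metric gluing lemma: a map `u` on `Ω ⊆ ℝ^m \ γ` that is `λ`-Lipschitz at scales
comparable to the distance to the closed set `γ`, and whose values near `γ` are
`λ`-close (relative to the distance to `γ`) to a `λ`-Lipschitz boundary datum `φ`
on `γ`, glues with `φ` to a `(5λ/δ)`-Lipschitz map on `Ω ∪ γ`. -/
theorem lipschitz_gluing {m : ℕ} (γ Ω : Set (EuclideanSpace ℝ (Fin m)))
    (hγne : γ.Nonempty) (hγcl : IsClosed γ) (hΩ : Ω ⊆ γᶜ)
    {X : Type*} [MetricSpace X] (lam δ : ℝ) (hlam : 0 ≤ lam) (hδ0 : 0 < δ) (hδ1 : δ ≤ 1)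
    (u φ U : EuclideanSpace ℝ (Fin m) → X)
    (hφ : ∀ x ∈ γ, ∀ y ∈ γ, dist (φ x) (φ y) ≤ lam * dist x y)
    (hu : ∀ x ∈ Ω, ∀ y ∈ Ω,
      dist x y ≤ δ * max (Metric.infDist x γ) (Metric.infDist y γ) →
      dist (u x) (u y) ≤ lam * dist x y)
    (hcol : ∀ x ∈ Ω, ∀ xγ ∈ γ, dist x xγ = Metric.infDist x γ →
      dist (u x) (φ xγ) ≤ lam * Metric.infDist x γ)
    (hUu : ∀ x ∈ Ω, U x = u x) (hUφ : ∀ x ∈ γ, U x = φ x) :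
    ∀ x ∈ Ω ∪ γ, ∀ y ∈ Ω ∪ γ, dist (U x) (U y) ≤ (5 * lam / δ) * dist x y := by
  have key : ∀ x ∈ Ω ∪ γ, ∃ p ∈ γ, dist x p = Metric.infDist x γ ∧
      dist (U x) (φ p) ≤ lam * Metric.infDist x γ := by
    intro x hx
    rcases hx with hx | hx
    · obtain ⟨p, hp, h⟩ := hγcl.exists_infDist_eq_dist hγne x
      refine ⟨p, hp, h.symm, ?_⟩
      rw [hUu x hx]
      exact hcol x hx p hp h.symm
    · refine ⟨x, hx, ?_, ?_⟩
      · rw [Metric.infDist_zero_of_mem hx, dist_self]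
      · rw [Metric.infDist_zero_of_mem hx, hUφ x hx, dist_self, mul_zero]
  intro x hx y hy
  have hE : dist x y ≤ dist x y / δ := by
    rw [le_div_iff₀ hδ0]
    nlinarith [dist_nonneg (x := x) (y := y)]
  have hE0 : 0 ≤ dist x y := dist_nonneg
  have heq : (5 * lam / δ) * dist x y = lam * (5 * (dist x y / δ)) := by ring
  rw [heq]
  have far : Metric.infDist x γ ≤ dist x y / δ → Metric.infDist y γ ≤ dist x y / δ →
      dist (U x) (U y) ≤ lam * (5 * (dist x y / δ)) := by
    intro h1 h2
    obtain ⟨p, hp, hxp, hUp⟩ := key x hx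
    obtain ⟨q, hq, hyq, hUq⟩ := key y hy
    have a1 := dist_triangle4 (U x) (φ p) (φ q) (U y)
    have a2 := hφ p hp q hq
    have a3 := dist_triangle4 p x y q
    rw [dist_comm (φ q)] at a1
    rw [dist_comm p x] at a3
    calc dist (U x) (U y) ≤ lam * (Metric.infDist x γ + dist p q + Metric.infDist y γ) := by
          linarith
      _ ≤ _ := mul_le_mul_of_nonneg_left (by linarith) hlam
  by_cases hn : x ∈ Ω ∧ y ∈ Ω ∧ dist x y ≤ δ * max (Metric.infDist x γ) (Metric.infDist y γ)
  · obtain ⟨h1, h2, h3⟩ := hn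
    rw [hUu x h1, hUu y h2]
    exact (hu x h1 y h2 h3).trans (mul_le_mul_of_nonneg_left (by linarith) hlam)
  · rcases hx with hx' | hx'
    · rcases hy with hy' | hy'
      · have h3 : δ * max (Metric.infDist x γ) (Metric.infDist y γ) < dist x y := by
          by_contra h
          exact hn ⟨hx', hy', not_lt.mp h⟩
        have h4 : max (Metric.infDist x γ) (Metric.infDist y γ) ≤ dist x y / δ := by
          rw [le_div_iff₀ hδ0]
          linarith
        exact far ((le_max_left _ _).trans h4) ((le_max_right _ _).trans h4)
      · apply far
        · exact (Metric.infDist_le_dist_of_mem hy').trans hE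
        · rw [Metric.infDist_zero_of_mem hy']
          linarith
    · apply far
      · rw [Metric.infDist_zero_of_mem hx']
        linarith
      · have := Metric.infDist_le_dist_of_mem (x := y) hx'
        rw [dist_comm] at this
        exact this.trans hE
end
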